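/- arXiv:2601.13301 — 18 statements merged into one kernel-verified Lean document; each statement's English description precedes it below -/
import Mathlib

section
/- Every left involutive semigroup is locally involutive: if X is a *-semigroup satisfying (xy)* = (x*xy)*x* for all x, y ∈ X, then (xy)* = y*x* holds whenever x*x = yy*, or x is a projection with x ≤ yy*, or y is a projection with y ≤ x*x. -/
/-- `p` is a projection: self-adjoint and idempotent. -/
def IsProj {X : Type*} [Semigroup X] (st : X → X) (p : X) : Prop :=
  st p = p ∧ p * p = p

/-- Order on idempotents: `e ≤ f` iff `e = ef = fe`. -/
def idemLe {X : Type*} [Semigroup X] (e f : X) : Prop :=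
  e * f = e ∧ f * e = e

/-- Every left involutive semigroup is locally involutive. -/
theorem left_involutive_is_locally_involutive
    {X : Type*} [Semigroup X] (st : X → X)
    (hst : ∀ x, st (st x) = x)
    (hpi : ∀ x, x * st x * x = x)
    (hleft : ∀ x y, st (x * y) = st (st x * x * y) * st x) :
    ∀ x y : X,
      (st x * x = y * st y ∨
       (IsProj st x ∧ idemLe x (y * st y)) ∨
       (IsProj st y ∧ idemLe y (st x * x))) →
      st (x * y) = st y * st x := by
  -- If `x*x` acts as a left identity on `y`, the left involutive law collapses.
  have key : ∀ x y, st x * x * y = y → st (x * y) = st y * st x := fun x y h => by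
    rw [hleft, h]
  rintro x y (h | ⟨⟨hx, -⟩, -, hle⟩ | ⟨-, -, hle⟩)
  · exact key x y (by rw [h, hpi])
  · -- `x ≤ yy*` says that `(y*)*y*` fixes `x`, so `(y*x)* = xy`; apply the involution.
    have h := key (st y) x (by rw [hst, hle])
    rw [hst, hx] at h
    rw [← h, hst, hx]
  · exact key x y hle
end

section
/- Every left involutive semigroup is corestrictive: for all x, y ∈ X one has c(xy) ≤ c(x), i.e. xy(xy)* = xy(xy)* · xx* = xx* · xy(xy)*. -/
/-- Every left involutive semigroup is corestrictive:
`c(xy) ≤ c(x)`, i.e. `xy(xy)* = xy(xy)*·xx* = xx*·xy(xy)*`. -/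
theorem left_involutive_corestrictive
    {X : Type*} [Semigroup X] (st : X → X)
    (hst : ∀ x, st (st x) = x)
    (hpi : ∀ x, x * st x * x = x)
    (hleft : ∀ x y, st (x * y) = st (st x * x * y) * st x) :
    ∀ x y : X,
      x * y * st (x * y) * (x * st x) = x * y * st (x * y) ∧
      x * st x * (x * y * st (x * y)) = x * y * st (x * y) := by
  intro x y
  constructor
  · have h1 : st x * x * st x = st x := by
      have h := hpi (st x)
      rwa [hst] at h
    -- `(xy)*` has `x*` as a right factor, and `x*` absorbs `xx*` on the right.
    have h2 : st (x * y) * (x * st x) = st (x * y) := by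
      rw [hleft x y, mul_assoc, ← mul_assoc (st x) x, h1]
    rw [mul_assoc (x * y), h2]
  · rw [← mul_assoc, ← mul_assoc, hpi]
end

section
/- In a left involutive semigroup, for all elements x, y: yy* ≤ x*x if and only if (x*x)y = y; and x*x ≤ yy* if and only if (yy*)x* = x*. -/
/-- In a left involutive semigroup: `c(y) ≤ d(x)` iff `d(x)y = y`, and
`d(x) ≤ c(y)` iff `c(y)x* = x*`. -/
theorem left_involutive_le_characterizations
    {X : Type*} [Semigroup X] (st : X → X)
    (hst : ∀ x, st (st x) = x)
    (hpi : ∀ x, x * st x * x = x)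
    (hleft : ∀ x y, st (x * y) = st (st x * x * y) * st x) :
    ∀ x y : X,
      (idemLe (y * st y) (st x * x) ↔ st x * x * y = y) ∧
      (idemLe (st x * x) (y * st y) ↔ y * st y * st x = st x) := by
  -- It suffices to treat the first equivalence: the second is its instance at `(y*, x*)`.
  have key : ∀ x y : X, idemLe (y * st y) (st x * x) ↔ st x * x * y = y := by
    intro x y
    constructor
    · rintro ⟨-, h⟩
      calc st x * x * y = st x * x * (y * st y * y) := by rw [hpi]
        _ = st x * x * (y * st y) * y := by simp only [mul_assoc]
        _ = y := by rw [h, hpi]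
    · intro h
      have h1 : st (x * y) = st y * st x := by rw [hleft, h]
      -- The left involutive law at `(x*, xy)` reads `(x*xy)* = (xy)* x`.
      have h2 : st y = st (x * y) * x := by
        have h3 := hleft (st x) (x * y)
        rwa [hst, ← mul_assoc, ← mul_assoc, h, hpi] at h3
      have h4 : st y * (st x * x) = st y := by rw [← mul_assoc, ← h1, ← h2]
      exact ⟨by rw [mul_assoc, h4], by rw [← mul_assoc, h]⟩
  intro x y
  refine ⟨key x y, ?_⟩
  have h := key (st y) (st x)
  rwa [hst, hst] at h
end

section
/- On any *-semigroup, the left order ≤_l (defined by x ≤_l y iff x*x ≤ y*y and x = y(x*x)) is a partial order: it is reflexive, antisymmetric, and transitive. -/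
/-- The left order on a `*`-semigroup: `x ≤ₗ y` iff `d(x) ≤ d(y)` and `x = y·d(x)`. -/
def leL {X : Type*} [Semigroup X] (st : X → X) (x y : X) : Prop :=
  idemLe (st x * x) (st y * y) ∧ x = y * (st x * x)

/-- On any `*`-semigroup the left order is reflexive, antisymmetric and transitive. -/
theorem left_order_is_partial_order
    {X : Type*} [Semigroup X] (st : X → X)
    (hst : ∀ x, st (st x) = x)
    (hpi : ∀ x, x * st x * x = x) :
    (∀ x : X, leL st x x) ∧
    (∀ x y : X, leL st x y → leL st y x → x = y) ∧
    (∀ x y z : X, leL st x y → leL st y z → leL st x z) := by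
  have hd : ∀ x, x * (st x * x) = x := fun x => by rw [← mul_assoc, hpi]
  refine ⟨fun x => ?_, ?_, ?_⟩
  · have h : (st x * x) * (st x * x) = st x * x := by rw [mul_assoc, hd]
    exact ⟨⟨h, h⟩, (hd x).symm⟩
  · rintro x y ⟨⟨h₁, -⟩, hx⟩ ⟨⟨-, h₂⟩, -⟩
    -- Both domain idempotents equal the product `(st x * x) * (st y * y)`.
    have h : st x * x = st y * y := h₁.symm.trans h₂
    rw [hx, h, hd]
  · rintro x y z ⟨⟨h₁, h₂⟩, hx⟩ ⟨⟨h₃, h₄⟩, hy⟩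
    refine ⟨⟨?_, ?_⟩, ?_⟩
    · rw [← h₁, mul_assoc, h₃]
    · rw [← h₂, ← mul_assoc, h₄]
    · calc x = y * (st x * x) := hx
        _ = z * (st y * y) * (st x * x) := by rw [← hy]
        _ = z * (st x * x) := by rw [mul_assoc, h₂]
end

section
/- In a left involutive semigroup, x ≤_l y holds if and only if y*x = x*x and yx* = xx*. -/
/-- In a left involutive semigroup, `x ≤ₗ y` iff `y*x = x*x` and `yx* = xx*`. -/
theorem left_involutive_leL_iff
    {X : Type*} [Semigroup X] (st : X → X)
    (hst : ∀ x, st (st x) = x)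
    (hpi : ∀ x, x * st x * x = x)
    (hleft : ∀ x y, st (x * y) = st (st x * x * y) * st x) :
    ∀ x y : X, leL st x y ↔ (st y * x = st x * x ∧ y * st x = x * st x) := by
  -- Elements of the form `a* a` are fixed by the involution.
  have hproj : ∀ a, st (st a * a) = st a * a := by
    intro a
    rw [hleft (st a) a, hst, hpi]
  have hpi' : ∀ a, st a * a * st a = st a := by
    intro a
    simpa only [hst] using hpi (st a)
  have hidem : ∀ a, st a * a * (st a * a) = st a * a := by
    intro a
    rw [← mul_assoc, hpi']
  intro x y
  constructor
  · rintro ⟨⟨-, hfe⟩, hx⟩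
    constructor
    · calc st y * x = st y * (y * (st x * x)) := by rw [← hx]
        _ = st x * x := by rw [← mul_assoc, hfe]
    · calc y * st x = y * (st x * x * st x) := by rw [hpi']
        _ = y * (st x * x) * st x := by rw [← mul_assoc]
        _ = x * st x := by rw [← hx]
  · rintro ⟨h1, h2⟩
    have hx : x = y * (st x * x) := by
      rw [← mul_assoc, h2, hpi]
    have hfe : st y * y * (st x * x) = st x * x := by
      rw [mul_assoc, ← hx, h1]
    refine ⟨⟨?_, hfe⟩, hx⟩
    -- With `e = x* x` and `f = y* y`, the left involutive law for `f e` reads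
    -- `(f e)* = (f* f e)* f*`, which collapses to `e = e f`.
    have h := hleft (st y * y) (st x * x)
    rw [hproj y, hidem y, hfe, hproj x] at h
    exact h.symm
end

section
/- In a locally involutive semigroup, the left and right partial orders coincide: for all x, y, one has x ≤_l y if and only if x ≤_r y. -/
/-- The right order: `x ≤ᵣ y` iff `c(x) ≤ c(y)` and `x = c(x)·y`. -/
def leR {X : Type*} [Semigroup X] (st : X → X) (x y : X) : Prop :=
  idemLe (x * st x) (y * st y) ∧ x = x * st x * y

/-- In a locally involutive semigroup, the left and right orders coincide. -/
theorem locally_involutive_leL_iff_leR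
    {X : Type*} [Semigroup X] (st : X → X)
    (hst : ∀ x, st (st x) = x)
    (hpi : ∀ x, x * st x * x = x)
    (hloc : ∀ x y : X,
      (st x * x = y * st y ∨
       (IsProj st x ∧ idemLe x (y * st y)) ∨
       (IsProj st y ∧ idemLe y (st x * x))) →
      st (x * y) = st y * st x) :
    ∀ x y : X, leL st x y ↔ leR st x y := by
  have hpi' : ∀ x, st x * x * st x = st x := fun x => by
    simpa only [hst] using hpi (st x)
  have hd : ∀ x, IsProj st (st x * x) := fun x =>
    ⟨by rw [hloc _ _ (Or.inl (by rw [hst])), hst], by rw [← mul_assoc, hpi']⟩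
  have hc : ∀ x, IsProj st (x * st x) := fun x => by
    simpa only [hst] using hd (st x)
  intro x y
  constructor
  · rintro ⟨hle, hx⟩
    have hp := hd x
    have hs : st x = st x * x * st y := by
      have h := hloc y (st x * x) (Or.inr (Or.inr ⟨hp, hle⟩))
      rwa [← hx, hp.1] at h
    have hxx : x * st x = y * (st x * x) * st y := by
      calc x * st x = x * (st x * x * st y) := by rw [← hs]
        _ = x * st x * x * st y := by simp only [mul_assoc]
        _ = x * st y := by rw [hpi]
        _ = y * (st x * x) * st y := by rw [← hx]
    refine ⟨⟨?_, ?_⟩, ?_⟩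
    · rw [hxx, mul_assoc, ← mul_assoc (st y), hpi']
    · rw [hxx, ← mul_assoc, ← mul_assoc, hpi]
    · rw [hxx, mul_assoc, mul_assoc, mul_assoc, ← mul_assoc (st x), hle.1, ← hx]
  · rintro ⟨hle, hx⟩
    have hq := hc x
    have hs : st x = st y * (x * st x) := by
      have h := hloc (x * st x) y (Or.inr (Or.inl ⟨hq, hle⟩))
      rwa [← hx, hq.1] at h
    have hxx : st x * x = st y * (x * st x) * y := by
      calc st x * x = st y * (x * st x) * x := by rw [← hs]
        _ = st y * x := by rw [mul_assoc, hpi]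
        _ = st y * (x * st x) * y := by rw [mul_assoc, ← hx]
    refine ⟨⟨?_, ?_⟩, ?_⟩
    · rw [hxx, mul_assoc, ← mul_assoc y, hpi]
    · rw [hxx, ← mul_assoc, ← mul_assoc, hpi']
    · rw [hxx, ← mul_assoc, ← mul_assoc, hle.2, ← hx]
end

section
/- In a locally involutive semigroup, x ≤_l y holds if and only if x* ≤_r y*. -/
/-- In a locally involutive semigroup, `x ≤ₗ y` iff `x* ≤ᵣ y*`. -/
theorem locally_involutive_leL_iff_star_leR
    {X : Type*} [Semigroup X] (st : X → X)
    (hst : ∀ x, st (st x) = x)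
    (hpi : ∀ x, x * st x * x = x)
    (hloc : ∀ x y : X,
      (st x * x = y * st y ∨
       (IsProj st x ∧ idemLe x (y * st y)) ∨
       (IsProj st y ∧ idemLe y (st x * x))) →
      st (x * y) = st y * st x) :
    ∀ x y : X, leL st x y ↔ leR st (st x) (st y) := by
  intro x y
  -- `d(x) = x*x` is a projection: `x*` and `x` are composable since `x** x* = x x*`.
  have hproj : IsProj st (st x * x) := by
    refine ⟨?_, ?_⟩
    · rw [hloc (st x) x (Or.inl (by rw [hst])), hst]
    · rw [mul_assoc, ← mul_assoc x, hpi]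
  unfold leL leR
  rw [hst x, hst y]
  -- Given `d(x) ≤ d(y)`, the star reverses both `y·d(x)` and `d(x)·y*`, so starring one
  -- factorization gives the other.
  refine and_congr_right fun hle => ⟨fun h => ?_, fun h => ?_⟩
  · have h2 := hloc y (st x * x) (Or.inr (Or.inr ⟨hproj, hle⟩))
    rwa [← h, hproj.1] at h2
  · have h2 := hloc (st x * x) (st y) (Or.inr (Or.inl ⟨hproj, by rwa [hst]⟩))
    rwa [← h, hproj.1, hst, hst] at h2
end

section
/- A left *-homomorphism f : X → Y of left involutive semigroups is multiplicative (f(xy) = f(x)f(y) for all x, y) if and only if f(px) = f(p)f(x) holds for every projection p of X and every element x of X. -/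
/-- A left `*`-homomorphism of left involutive semigroups is multiplicative iff
`f(px) = f(p)f(x)` for every projection `p` and element `x`. -/
theorem left_star_hom_multiplicative_iff
    {X Y : Type*} [Semigroup X] [Semigroup Y]
    (stX : X → X) (stY : Y → Y)
    (hstX : ∀ x, stX (stX x) = x)
    (hpiX : ∀ x, x * stX x * x = x)
    (hleftX : ∀ x y, stX (x * y) = stX (stX x * x * y) * stX x)
    (hstY : ∀ y, stY (stY y) = y)
    (hpiY : ∀ y, y * stY y * y = y)
    (hleftY : ∀ x y, stY (x * y) = stY (stY x * x * y) * stY x)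
    (f : X → Y)
    (hfstar : ∀ x, f (stX x) = stY (f x))
    (hflhom : ∀ x y, f (x * y) = f x * f (stX x * x * y)) :
    (∀ x y : X, f (x * y) = f x * f y) ↔
      (∀ p x : X, IsProj stX p → f (p * x) = f p * f x) := by
  refine ⟨fun h p x _ => h p x, fun h x y => ?_⟩
  have hp : IsProj stX (stX x * x) := by
    constructor
    · rw [hleftX (stX x) x, hstX, hpiX]
    · rw [mul_assoc, ← mul_assoc x, hpiX]
  have hx : f x = f x * f (stX x * x) := by
    have h1 := hflhom x (stX x * x)
    rwa [hp.2, ← mul_assoc, hpiX] at h1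
  rw [hflhom x y, h _ y hp, ← mul_assoc, ← hx]
end

section
/- In a locally involutive semigroup, the natural partial order is compatible with composition: if x₁ ≤ x₂, y₁ ≤ y₂, x₁*x₁ = y₁y₁*, and x₂*x₂ = y₂y₂*, then x₁y₁ ≤ x₂y₂, where ≤ denotes the left order ≤_l (which coincides with the right order). -/
/-- In a locally involutive semigroup, the natural partial order is compatible
with composition. -/
theorem locally_involutive_order_compatible_with_composition
    {X : Type*} [Semigroup X] (st : X → X)
    (hst : ∀ x, st (st x) = x)
    (hpi : ∀ x, x * st x * x = x)
    (hloc : ∀ x y : X,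
      (st x * x = y * st y ∨
       (IsProj st x ∧ idemLe x (y * st y)) ∨
       (IsProj st y ∧ idemLe y (st x * x))) →
      st (x * y) = st y * st x)
    (x₁ x₂ y₁ y₂ : X)
    (hx : leL st x₁ x₂) (hy : leL st y₁ y₂)
    (h₁ : st x₁ * x₁ = y₁ * st y₁)
    (h₂ : st x₂ * x₂ = y₂ * st y₂) :
    leL st (x₁ * y₁) (x₂ * y₂) := by
  have key : ∀ x y : X, st x * x = y * st y → st (x * y) * (x * y) = st y * y := by
    intro x y h
    calc st (x * y) * (x * y) = st y * st x * (x * y) := by rw [hloc x y (Or.inl h)]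
      _ = st y * (st x * x) * y := by simp only [mul_assoc]
      _ = st y * (y * st y * y) := by rw [h]; simp only [mul_assoc]
      _ = st y * y := by rw [hpi]
  refine ⟨?_, ?_⟩
  · rw [key x₁ y₁ h₁, key x₂ y₂ h₂]
    exact hy.1
  · rw [key x₁ y₁ h₁]
    calc x₁ * y₁ = x₂ * (y₁ * st y₁) * y₁ := by rw [← h₁, ← hx.2]
      _ = x₂ * (y₁ * st y₁ * y₁) := by simp only [mul_assoc]
      _ = x₂ * (y₂ * (st y₁ * y₁)) := by rw [hpi, ← hy.2]
      _ = x₂ * y₂ * (st y₁ * y₁) := by rw [mul_assoc]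
end

section
/- In a locally involutive semigroup X, for any x ∈ X and any projection p with p ≤ x*x, the element xp satisfies (xp)*(xp) = p and xp ≤_l x, and xp is the unique element of X with these two properties. -/
/-- In a locally involutive semigroup, `xp` is the unique restriction of `x`
to a projection `p ≤ d(x)`: it satisfies `d(xp) = p` and `xp ≤ₗ x`, and it is
the unique such element. -/
theorem locally_involutive_restriction
    {X : Type*} [Semigroup X] (st : X → X)
    (hst : ∀ x, st (st x) = x)
    (hpi : ∀ x, x * st x * x = x)
    (hloc : ∀ x y : X,
      (st x * x = y * st y ∨
       (IsProj st x ∧ idemLe x (y * st y)) ∨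
       (IsProj st y ∧ idemLe y (st x * x))) →
      st (x * y) = st y * st x)
    (x p : X) (hp : IsProj st p) (hpd : idemLe p (st x * x)) :
    st (x * p) * (x * p) = p ∧ leL st (x * p) x ∧
      ∀ z : X, st z * z = p → leL st z x → z = x * p := by
  have hd : st (x * p) * (x * p) = p := by
    -- The third clause of local involutivity gives `(xp)* = p x*`.
    rw [hloc x p (Or.inr (Or.inr ⟨hp, hpd⟩)), hp.1]
    calc p * st x * (x * p) = p * (st x * x) * p := by simp only [mul_assoc]
      _ = p := by rw [hpd.1, hp.2]
  refine ⟨hd, ⟨hd.symm ▸ hpd, by rw [hd]⟩, fun z hz hzx => ?_⟩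
  rw [← hz]
  exact hzx.2
end

section
/- Let X be a left involutive semigroup whose projections commute pairwise (pq = qp for all projections p, q). Then X is an inverse semigroup: for every x ∈ X, x* is the unique element y with xyx = x and yxy = y. -/
section LeftInvolutive

variable {X : Type*} [Semigroup X] {st : X → X}

theorem star_mul_self_star (hst : ∀ x, st (st x) = x) (hpi : ∀ x, x * st x * x = x) (x : X) :
    st x * x * st x = st x := by
  simpa only [hst] using hpi (st x)

theorem isProj_mul_star (hst : ∀ x, st (st x) = x) (hpi : ∀ x, x * st x * x = x)
    (hleft : ∀ x y, st (x * y) = st (st x * x * y) * st x) (x : X) :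
    IsProj st (x * st x) := by
  refine ⟨?_, ?_⟩
  · rw [hleft, star_mul_self_star hst hpi, hst]
  · rw [← mul_assoc, hpi]

theorem isProj_star_mul (hst : ∀ x, st (st x) = x) (hpi : ∀ x, x * st x * x = x)
    (hleft : ∀ x y, st (x * y) = st (st x * x * y) * st x) (x : X) :
    IsProj st (st x * x) := by
  simpa only [hst] using isProj_mul_star hst hpi hleft (st x)

theorem star_proj_mul_absorb
    (hleft : ∀ x y, st (x * y) = st (st x * x * y) * st x) {p : X} (hp : IsProj st p) (y : X) :
    st (p * y) * p = st (p * y) := by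
  have h := hleft p y
  rw [hp.1, hp.2] at h
  exact h.symm

theorem isProj_mul (hst : ∀ x, st (st x) = x) (hpi : ∀ x, x * st x * x = x)
    (hleft : ∀ x y, st (x * y) = st (st x * x * y) * st x)
    (hcomm : ∀ p q : X, IsProj st p → IsProj st q → p * q = q * p)
    {p q : X} (hp : IsProj st p) (hq : IsProj st q) : IsProj st (p * q) := by
  have h1 := star_proj_mul_absorb hleft hp q
  have h2 := star_proj_mul_absorb hleft hq p
  rw [← hcomm p q hp hq] at h2
  have h3 : st (p * q) * (p * q) = st (p * q) := by rw [← mul_assoc, h1, h2]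
  have h4 := isProj_star_mul hst hpi hleft (p * q)
  rw [h3] at h4
  have h5 : p * q = st (p * q) := (hst _).symm.trans h4.1
  rw [← h5] at h4
  exact h4

theorem star_proj_mul (hst : ∀ x, st (st x) = x) (hpi : ∀ x, x * st x * x = x)
    (hleft : ∀ x y, st (x * y) = st (st x * x * y) * st x)
    (hcomm : ∀ p q : X, IsProj st p → IsProj st q → p * q = q * p)
    {p : X} (hp : IsProj st p) (y : X) : st (p * y) = st y * p := by
  have hq := isProj_mul_star hst hpi hleft y
  have hc := hcomm _ _ hp hq
  -- the left involutive law gives `(y* p)* = e* y`, where `e = (y y*) p` is a projection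
  have h : st (st y * p) = p * y := by
    rw [hleft, hst, (isProj_mul hst hpi hleft hcomm hq hp).1, ← hc, mul_assoc, hpi]
  rw [← h, hst]

/-- The involution is an anti-automorphism. -/
theorem star_mul_rev (hst : ∀ x, st (st x) = x) (hpi : ∀ x, x * st x * x = x)
    (hleft : ∀ x y, st (x * y) = st (st x * x * y) * st x)
    (hcomm : ∀ p q : X, IsProj st p → IsProj st q → p * q = q * p)
    (x y : X) : st (x * y) = st y * st x := by
  rw [hleft, star_proj_mul hst hpi hleft hcomm (isProj_star_mul hst hpi hleft x), mul_assoc,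
    star_mul_self_star hst hpi]

theorem isProj_of_idem (hst : ∀ x, st (st x) = x) (hpi : ∀ x, x * st x * x = x)
    (hleft : ∀ x y, st (x * y) = st (st x * x * y) * st x)
    (hcomm : ∀ p q : X, IsProj st p → IsProj st q → p * q = q * p)
    {e : X} (he : e * e = e) : IsProj st e := by
  have hse : st e * st e = st e := by rw [← star_mul_rev hst hpi hleft hcomm, he]
  refine ⟨?_, he⟩
  calc st e = st e * (e * e) * st e := by rw [he, star_mul_self_star hst hpi]
    _ = (st e * e) * (e * st e) := by simp only [mul_assoc]
    _ = (e * st e) * (st e * e) :=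
      hcomm _ _ (isProj_star_mul hst hpi hleft e) (isProj_mul_star hst hpi hleft e)
    _ = e * (st e * st e) * e := by simp only [mul_assoc]
    _ = e := by rw [hse, hpi]

end LeftInvolutive

/-- A left involutive semigroup with commuting projections is an inverse
semigroup: `x*` is the unique element `y` with `xyx = x` and `yxy = y`. -/
theorem left_involutive_commuting_projections_inverse
    {X : Type*} [Semigroup X] (st : X → X)
    (hst : ∀ x, st (st x) = x)
    (hpi : ∀ x, x * st x * x = x)
    (hleft : ∀ x y, st (x * y) = st (st x * x * y) * st x)
    (hcomm : ∀ p q : X, IsProj st p → IsProj st q → p * q = q * p) :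
    ∀ x y : X, (x * y * x = x ∧ y * x * y = y) ↔ y = st x := by
  intro x y
  constructor
  · rintro ⟨h1, h2⟩
    have hxy : IsProj st (x * y) :=
      isProj_of_idem hst hpi hleft hcomm (by rw [← mul_assoc, h1])
    have hyx : IsProj st (y * x) :=
      isProj_of_idem hst hpi hleft hcomm (by rw [← mul_assoc, h2])
    have e1 : x * y = x * st x := by
      calc x * y = (x * st x) * (x * y) := by rw [← mul_assoc, hpi]
        _ = (x * y) * (x * st x) := hcomm _ _ (isProj_mul_star hst hpi hleft x) hxy
        _ = x * st x := by rw [← mul_assoc, h1]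
    have e2 : y * x = st x * x := by
      calc y * x = (y * x) * (st x * x) := by rw [mul_assoc, ← mul_assoc x, hpi]
        _ = (st x * x) * (y * x) := hcomm _ _ hyx (isProj_star_mul hst hpi hleft x)
        _ = st x * x := by rw [mul_assoc, ← mul_assoc x, h1]
    calc y = y * x * y := h2.symm
      _ = st x * (x * y) := by rw [e2, mul_assoc]
      _ = st x := by rw [e1, ← mul_assoc, star_mul_self_star hst hpi]
  · rintro rfl
    exact ⟨hpi x, star_mul_self_star hst hpi x⟩
end

section
/- For a left *-homomorphism f : X → S of left involutive semigroups, the following are equivalent: (1) f is étale; (2) for every projection p of X, f restricts to a bijection from {x ∈ X : xx* ≤ p} onto {s ∈ S : ss* ≤ f(p)}; (3) for every projection p of X and every s ∈ S with s = f(p)s, there is a unique x ∈ X with x = px and f(x) = s. -/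
/-- A map `f : X → S` is étale if for every `x ∈ X` it induces a bijection
from `xX` onto `f(x)S`. -/
def Etale {X S : Type*} [Semigroup X] [Semigroup S] (f : X → S) : Prop :=
  ∀ x : X, Set.BijOn f {z : X | ∃ w : X, z = x * w} {t : S | ∃ s : S, t = f x * s}

/-- In a left involutive semigroup `x x*` is a projection. -/
lemma isProj_range {X : Type*} [Semigroup X] {st : X → X}
    (hst : ∀ x, st (st x) = x) (hpi : ∀ x, x * st x * x = x)
    (hleft : ∀ x y, st (x * y) = st (st x * x * y) * st x) (x : X) :
    IsProj st (x * st x) := by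
  have hpi' : st x * x * st x = st x := by simpa [hst] using hpi (st x)
  refine ⟨?_, ?_⟩
  · rw [hleft, hpi', hst]
  · rw [← mul_assoc, hpi]

lemma idemLe_range_iff {X : Type*} [Semigroup X] {st : X → X}
    (hpi : ∀ x, x * st x * x = x)
    (hleft : ∀ x y, st (x * y) = st (st x * x * y) * st x) {p : X} (hp : IsProj st p) (x : X) :
    idemLe (x * st x) p ↔ x = p * x := by
  constructor
  · rintro ⟨-, h⟩
    calc x = x * st x * x := (hpi x).symm
      _ = p * (x * st x) * x := by rw [h]
      _ = p * x := by rw [mul_assoc, hpi]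
  · intro h
    have hx : st x * p = st x := by
      have := hleft p x
      rw [hp.1, hp.2, ← h] at this
      exact this.symm
    exact ⟨by rw [mul_assoc, hx], by rw [← mul_assoc, ← h]⟩

lemma mul_range_eq_fixed {X : Type*} [Semigroup X] {st : X → X}
    (hpi : ∀ x, x * st x * x = x) (x : X) :
    {z : X | ∃ w : X, z = x * w} = {z : X | z = x * st x * z} := by
  ext z
  constructor
  · rintro ⟨w, rfl⟩
    change x * w = x * st x * (x * w)
    rw [← mul_assoc, hpi]
  · intro h
    exact ⟨st x * z, by rw [← mul_assoc]; exact h⟩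

/-- For a left `*`-homomorphism of left involutive semigroups, the following are
equivalent: (1) `f` is étale; (2) for every projection `p`, `f` restricts to a
bijection from `{x : c(x) ≤ p}` onto `{s : c(s) ≤ f(p)}`; (3) every equation
`s = f(p)s` lifts uniquely to an equation `x = px` with `f(x) = s`. -/
theorem etale_characterizations
    {X S : Type*} [Semigroup X] [Semigroup S]
    (stX : X → X) (stS : S → S)
    (hstX : ∀ x, stX (stX x) = x)
    (hpiX : ∀ x, x * stX x * x = x)
    (hleftX : ∀ x y, stX (x * y) = stX (stX x * x * y) * stX x)
    (hstS : ∀ s, stS (stS s) = s)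
    (hpiS : ∀ s, s * stS s * s = s)
    (hleftS : ∀ s t, stS (s * t) = stS (stS s * s * t) * stS s)
    (f : X → S)
    (hfstar : ∀ x, f (stX x) = stS (f x))
    (hflhom : ∀ x y, f (x * y) = f x * f (stX x * x * y)) :
    (Etale f ↔
      ∀ p : X, IsProj stX p →
        Set.BijOn f {x : X | idemLe (x * stX x) p}
          {s : S | idemLe (s * stS s) (f p)}) ∧
    (Etale f ↔
      ∀ p : X, IsProj stX p → ∀ s : S, s = f p * s →
        ∃! x : X, x = p * x ∧ f x = s) := by
  have hpiX' : ∀ x, stX x * x * stX x = stX x := fun x => by simpa [hstX] using hpiX (stX x)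
  have hfproj : ∀ p, IsProj stX p → IsProj stS (f p) := by
    rintro p ⟨h1, h2⟩
    refine ⟨by rw [← hfstar, h1], ?_⟩
    have := hflhom p p
    rw [h1, h2, h2] at this
    exact this.symm
  have hfrange : ∀ x, f (x * stX x) = f x * stS (f x) := fun x => by
    rw [hflhom, hpiX', hfstar]
  have hmaps : ∀ p, IsProj stX p → ∀ x, x = p * x → f x = f p * f x := by
    intro p hp x hx
    have := hflhom p x
    rwa [hp.1, hp.2, ← hx] at this
  have h1 : Etale f ↔ ∀ p : X, IsProj stX p →
      Set.BijOn f {x : X | x = p * x} {s : S | s = f p * s} := by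
    constructor
    · intro h p hp
      have := h p
      rw [mul_range_eq_fixed hpiX, mul_range_eq_fixed hpiS, hp.1, hp.2, (hfproj p hp).1,
        (hfproj p hp).2] at this
      exact this
    · intro h x
      rw [mul_range_eq_fixed hpiX, mul_range_eq_fixed hpiS, ← hfrange]
      exact h _ (isProj_range hstX hpiX hleftX x)
  rw [h1]
  refine ⟨forall₂_congr fun p hp => ?_, forall₂_congr fun p hp => ?_⟩
  · simp only [idemLe_range_iff hpiX hleftX hp, idemLe_range_iff hpiS hleftS (hfproj p hp)]
  · constructor
    · intro h s hs
      obtain ⟨x, hx, hxs⟩ := h.surjOn hs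
      exact ⟨x, ⟨hx, hxs⟩, fun y hy => h.injOn hy.1 hx (hy.2.trans hxs.symm)⟩
    · intro h
      refine ⟨fun x hx => hmaps p hp x hx, fun x hx y hy hxy => ?_, fun s hs => ?_⟩
      · exact (h (f x) (hmaps p hp x hx)).unique ⟨hx, rfl⟩ ⟨hy, hxy.symm⟩
      · obtain ⟨x, hx, -⟩ := h s hs
        exact ⟨x, hx⟩
end

section
/- An étale left *-homomorphism reflects right projections: if f : X → S is an étale left *-homomorphism of *-semigroups and f(x) = f(x)·f(x)*, then x = x·x*. -/
/-- An étale left `*`-homomorphism reflects right projections: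
if `f(x) = f(x)f(x)*` then `x = xx*`. -/
theorem etale_reflects_right_projections
    {X S : Type*} [Semigroup X] [Semigroup S]
    (stX : X → X) (stS : S → S)
    (hstX : ∀ x, stX (stX x) = x)
    (hpiX : ∀ x, x * stX x * x = x)
    (hstS : ∀ s, stS (stS s) = s)
    (hpiS : ∀ s, s * stS s * s = s)
    (f : X → S)
    (hfstar : ∀ x, f (stX x) = stS (f x))
    (hflhom : ∀ x y, f (x * y) = f x * f (stX x * x * y))
    (hetale : Etale f) :
    ∀ x : X, f x = f x * stS (f x) → x = x * stX x := by
  -- Both `x = x(x*x)` and `xx*` lie in `xX`, where `f` is injective, and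
  -- `f(xx*) = f(x)f(x*xx*) = f(x)f(x*) = f(x)`.
  intro x hx
  refine (hetale x).injOn ⟨stX x * x, ?_⟩ ⟨stX x, rfl⟩ ?_
  · rw [← mul_assoc, hpiX]
  · have h := hpiX (stX x)
    rw [hstX] at h
    rw [hflhom, h, hfstar, ← hx]
end

section
/- Let X, Y and S be *-semigroups, f : X → S a *-homomorphism, h : Y → S an étale *-homomorphism, and ψ : X → Y a left *-homomorphism with h ∘ ψ = f. Then ψ is multiplicative, i.e. ψ(xy) = ψ(x)ψ(y) for all x, y ∈ X; moreover, if f is étale then so is ψ. -/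
/-- If `f : X → S` is a `*`-homomorphism, `h : Y → S` is an étale
`*`-homomorphism and `ψ : X → Y` is a left `*`-homomorphism with `h ∘ ψ = f`,
then `ψ` is multiplicative; moreover if `f` is étale then so is `ψ`. -/
theorem left_star_hom_over_etale_is_multiplicative
    {X Y S : Type*} [Semigroup X] [Semigroup Y] [Semigroup S]
    (stX : X → X) (stY : Y → Y) (stS : S → S)
    (hstX : ∀ x, stX (stX x) = x) (hpiX : ∀ x, x * stX x * x = x)
    (hstY : ∀ y, stY (stY y) = y) (hpiY : ∀ y, y * stY y * y = y)
    (hstS : ∀ s, stS (stS s) = s) (hpiS : ∀ s, s * stS s * s = s)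
    (f : X → S)
    (hfstar : ∀ x, f (stX x) = stS (f x))
    (hfmul : ∀ x y, f (x * y) = f x * f y)
    (h : Y → S)
    (hhstar : ∀ y, h (stY y) = stS (h y))
    (hhmul : ∀ y z, h (y * z) = h y * h z)
    (hhetale : Etale h)
    (ψ : X → Y)
    (hψstar : ∀ x, ψ (stX x) = stY (ψ x))
    (hψlhom : ∀ x y, ψ (x * y) = ψ x * ψ (stX x * x * y))
    (hcomm : ∀ x, h (ψ x) = f x) :
    (∀ x y : X, ψ (x * y) = ψ x * ψ y) ∧ (Etale f → Etale ψ) := by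
  -- `ψ (x * y)` and `ψ x * ψ y` both lie in `ψ(x)Y`, where `h` is injective.
  have hmul : ∀ x y : X, ψ (x * y) = ψ x * ψ y := fun x y =>
    (hhetale (ψ x)).injOn ⟨_, hψlhom x y⟩ ⟨_, rfl⟩
      (by rw [hcomm, hhmul, hcomm, hcomm, hfmul])
  refine ⟨hmul, fun hf x => ⟨?_, ?_, ?_⟩⟩
  · rintro _ ⟨w, rfl⟩
    exact ⟨ψ w, hmul x w⟩
  · intro a ha b hb hab
    exact (hf x).injOn ha hb (by rw [← hcomm, ← hcomm, hab])
  · -- Lift `h (ψ x * w) ∈ f(x)S` along `f` to `x * v`; injectivity of `h` on `ψ(x)Y`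
    -- identifies `ψ (x * v)` with `ψ x * w`.
    rintro _ ⟨w, rfl⟩
    obtain ⟨_, ⟨v, rfl⟩, hv⟩ := (hf x).surjOn
      (show h (ψ x * w) ∈ {t : S | ∃ s : S, t = f x * s} from ⟨h w, by rw [hhmul, hcomm]⟩)
    exact ⟨x * v, ⟨v, rfl⟩,
      (hhetale (ψ x)).injOn ⟨_, hmul x v⟩ ⟨w, rfl⟩ (by rw [hcomm, hv])⟩
end

section
/- Let f : X → S be an étale left *-homomorphism of *-semigroups, with canonical action (x, s) ↦ x·s. Then for all x, y ∈ X one has x·f(x*xy) = xy, and in particular x·f(x*x) = x. Moreover, f is multiplicative (f(xy) = f(x)f(y)) if and only if x·f(y) = xy for all x, y ∈ X, in which case (xy)·s = x·(y·s) for all s ∈ S. -/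
/-- For an étale left `*`-homomorphism `f : X → S` with its canonical action
`(x, s) ↦ x·s`: `x·f(x*xy) = xy`, in particular `x·f(x*x) = x`; and `f` is
multiplicative iff `x·f(y) = xy` for all `x, y`, in which case
`(xy)·s = x(y·s)`. -/
theorem canonical_action_properties
    {X S : Type*} [Semigroup X] [Semigroup S]
    (stX : X → X) (stS : S → S)
    (hstX : ∀ x, stX (stX x) = x) (hpiX : ∀ x, x * stX x * x = x)
    (hstS : ∀ s, stS (stS s) = s) (hpiS : ∀ s, s * stS s * s = s)
    (f : X → S)
    (hfstar : ∀ x, f (stX x) = stS (f x))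
    (hflhom : ∀ x y, f (x * y) = f x * f (stX x * x * y))
    (hetale : Etale f)
    (act : X → S → X)
    (hact1 : ∀ x s, x * stX x * act x s = act x s)
    (hact2 : ∀ x s, f (act x s) = f x * s) :
    (∀ x y : X, act x (f (stX x * x * y)) = x * y) ∧
    (∀ x : X, act x (f (stX x * x)) = x) ∧
    ((∀ x y : X, f (x * y) = f x * f y) ↔ (∀ x y : X, act x (f y) = x * y)) ∧
    ((∀ x y : X, f (x * y) = f x * f y) →
      ∀ (x y : X) (s : S), act (x * y) s = x * act y s) := by
  -- Both elements lie in `xX`, on which `f` is injective.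
  have eq_of_map : ∀ (x w : X) (s : S), f (x * w) = f x * s → act x s = x * w := by
    intro x w s h
    refine (hetale x).injOn ⟨stX x * act x s, ?_⟩ ⟨w, rfl⟩ ?_
    · rw [← mul_assoc, hact1]
    · rw [hact2, h]
  have act_map : ∀ x y : X, act x (f (stX x * x * y)) = x * y :=
    fun x y => eq_of_map x y _ (hflhom x y)
  refine ⟨act_map, ?_, ⟨?_, ?_⟩, ?_⟩
  · intro x
    have h := act_map x (stX x * x)
    have idem : stX x * x * (stX x * x) = stX x * x := by
      rw [mul_assoc, ← mul_assoc x, hpiX]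
    rwa [idem, ← mul_assoc, hpiX] at h
  · exact fun hmul x y => eq_of_map x y _ (hmul x y)
  · intro h x y
    rw [← h x y, hact2]
  · intro hmul x y s
    -- The comparison takes place in `xX`, which contains `(xy)X`.
    refine (hetale x).injOn ⟨y * (stX (x * y) * act (x * y) s), ?_⟩ ⟨act y s, rfl⟩ ?_
    · rw [← mul_assoc, ← mul_assoc, hact1]
    · rw [hact2, hmul, hmul, hact2, mul_assoc]
end

section
/- Let S be a *-semigroup and f : X → S an involutive S-set. Then X with the product xy := x·f(y) (and the given involution) is a *-semigroup, f is an étale *-homomorphism with respect to this product, and the given S-action coincides with the canonical action associated with f. -/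
/-!
Everything follows from the identity `x·(f(x)* (f(x) s)) = x·s`, a consequence of the unit law
`x·(f(x)* f(x)) = x` and associativity of the action: it recovers `x·s` from `x` and `f(x·s) = f(x) s`.
This gives injectivity of `f` on `xX` and uniqueness in the canonical action. It also gives
surjectivity onto `f(x)S`, since `f(x)* f(x) s` is the `f`-value of `x*·(f(x) s)`.
-/

/-- An involutive `S`-set `f : X → S`, with product `x·y := x·f(y)`, is a
`*`-semigroup, `f` is an étale `*`-homomorphism for this product, and the given
action coincides with the canonical lifting action associated with `f`. -/
theorem involutive_S_set_product
    {X S : Type*} [Semigroup S]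
    (stS : S → S)
    (hstS : ∀ s, stS (stS s) = s) (hpiS : ∀ s, s * stS s * s = s)
    (stX : X → X) (hstX : ∀ x, stX (stX x) = x)
    (f : X → S)
    (hfstar : ∀ x, f (stX x) = stS (f x))
    (act : X → S → X)
    (hactassoc : ∀ x s t, act (act x s) t = act x (s * t))
    (hequiv : ∀ x s, f (act x s) = f x * s)
    (hunit : ∀ x, act x (stS (f x) * f x) = x) :
    -- the product `x·y := act x (f y)` is associative
    (∀ x y z : X, act (act x (f y)) (f z) = act x (f (act y (f z)))) ∧
    -- every element is a partial isometry: `x x* x = x`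
    (∀ x : X, act (act x (f (stX x))) (f x) = x) ∧
    -- `f` is multiplicative for this product (hence a `*`-homomorphism)
    (∀ x y : X, f (act x (f y)) = f x * f y) ∧
    -- `f` is étale for this product
    (∀ x : X, Set.BijOn f {z : X | ∃ w : X, z = act x (f w)}
      {t : S | ∃ s : S, t = f x * s}) ∧
    -- the given action is the canonical action: `act x s` is the unique
    -- element `z` with `x x* z = z` (w.r.t. the product) and `f z = f x * s`
    (∀ (x : X) (s : S),
      act (act x (f (stX x))) (f (act x s)) = act x s ∧
      f (act x s) = f x * s ∧
      ∀ z : X, act (act x (f (stX x))) (f z) = z → f z = f x * s →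
        z = act x s) := by
  -- the unit law moves along the action, so `x·s` depends on `x` and `f x * s` only
  have key : ∀ x s, act x (stS (f x) * (f x * s)) = act x s := fun x s => by
    rw [← mul_assoc, ← hactassoc, hunit]
  refine ⟨fun x y z => ?_, fun x => ?_, fun x y => hequiv x (f y), fun x => ⟨?_, ?_, ?_⟩,
    fun x s => ⟨?_, hequiv x s, fun z hz hfz => ?_⟩⟩
  · rw [hactassoc, hequiv]
  · rw [hactassoc, hfstar, hunit]
  · rintro _ ⟨w, rfl⟩
    exact ⟨f w, hequiv x (f w)⟩
  · rintro _ ⟨v, rfl⟩ _ ⟨w, rfl⟩ h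
    rw [hequiv, hequiv] at h
    rw [← key x (f v), h, key]
  · rintro _ ⟨s, rfl⟩
    -- `x·s = x (x*·(f x * s))` exhibits `x·s` as an element of `xX`
    refine ⟨act x s, ⟨act (stX x) (f x * s), ?_⟩, hequiv x s⟩
    rw [hequiv, hfstar, key]
  · rw [hactassoc, hfstar, hequiv, key]
  · rw [← hz, hactassoc, hfstar, hfz, key]
end

section
/- Let S be an inverse semigroup and e ∈ S an idempotent. Then S(e) = {(r,s) ∈ S × S : s*s = rr* and es = s}, with product (p,q)(r,s) = (pr, qprr*p*) and involution (r,s)* = (r*, sr), is a left involutive semigroup, and the map ψ_e : S(e) → S, ψ_e(r,s) = r, is an étale *-homomorphism. -/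
/-!
The identities all reduce to two standard facts about an inverse semigroup: idempotents commute
(`InvSe.idem_comm`), and hence `(xy)* = y* x*` (`InvSe.star_mul`).  The crucial remark is that
`(p,q)(r,s) = (pr, q (pr)(pr)*)`: an element of `a · S(e)` is determined by its first component,
which is injectivity of `ψₑ`.  For surjectivity, `p t` is the image of
`a · (p*p t, q p (p*p t)(p*p t)*)`, and the second factor lies in `S(e)` because
`(qp)*(qp) = p*p`.
-/

/-- The underlying set of the representable left involutive semigroup `S(e)`:
pairs `(r, s)` with `s*s = rr*` and `es = s`. -/
def Se {S : Type*} [Semigroup S] (st : S → S) (e : S) : Set (S × S) :=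
  {rs | st rs.2 * rs.2 = rs.1 * st rs.1 ∧ e * rs.2 = rs.2}

/-- The product `(p,q)(r,s) = (pr, qprr*p*)` on `S(e)`. -/
def mulSe {S : Type*} [Semigroup S] (st : S → S) (a b : S × S) : S × S :=
  (a.1 * b.1, a.2 * a.1 * b.1 * st b.1 * st a.1)

/-- The involution `(r,s)* = (r*, sr)` on `S(e)`. -/
def starSe {S : Type*} [Semigroup S] (st : S → S) (a : S × S) : S × S :=
  (st a.1, a.2 * a.1)

namespace InvSe

section

variable {S : Type*} [Semigroup S] {st : S → S}

theorem idem_comm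
    (h1 : ∀ s, s * st s * s = s) (h2 : ∀ s, st s * s * st s = st s)
    (hu : ∀ s y : S, s * y * s = s → y * s * y = y → y = st s)
    {e f : S} (he : e * e = e) (hf : f * f = f) : e * f = f * e := by
  -- A product of two idempotents is idempotent: its inverse `x` satisfies `x = f x e`, so `x` is
  -- idempotent, and therefore equal to its own inverse `e f`.
  have key : ∀ e f : S, e * e = e → f * f = f → (e * f) * (e * f) = e * f := by
    intro e f he hf
    have a1 := h1 (e * f)
    have a2 := h2 (e * f)
    have he' : ∀ z, e * (e * z) = e * z := fun z => by rw [← mul_assoc, he]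
    have hf' : ∀ z, f * (f * z) = f * z := fun z => by rw [← mul_assoc, hf]
    have a2' : ∀ z, st (e * f) * (e * (f * (st (e * f) * z))) = st (e * f) * z := fun z => by
      conv_rhs => rw [← a2]
      simp only [mul_assoc]
    simp only [mul_assoc] at a1
    have hx : f * st (e * f) * e = st (e * f) := by
      apply hu
      · simp only [mul_assoc, he', hf', a1]
      · simp only [mul_assoc, he', hf', a2']
    have hxx : st (e * f) * st (e * f) = st (e * f) := by
      conv_lhs => rw [← hx]
      simp only [mul_assoc, a2']
      simpa only [mul_assoc] using hx
    have hself : st (e * f) = st (st (e * f)) := hu _ _ (by rw [hxx, hxx]) (by rw [hxx, hxx])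
    have hef : e * f = st (st (e * f)) := hu _ _ a2 (h1 (e * f))
    rw [hef, ← hself, hxx]
  have hef := key e f he hf
  have hfe := key f e hf he
  have he' : ∀ z, e * (e * z) = e * z := fun z => by rw [← mul_assoc, he]
  have hf' : ∀ z, f * (f * z) = f * z := fun z => by rw [← mul_assoc, hf]
  have e1 : e * f = st (e * f) := hu _ _ (by rw [hef, hef]) (by rw [hef, hef])
  have e2 : f * e = st (e * f) := by
    apply hu
    · simpa only [mul_assoc, he', hf'] using hef
    · simpa only [mul_assoc, he', hf'] using hfe
  rw [e1, ← e2]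

theorem star_star
    (h1 : ∀ s, s * st s * s = s) (h2 : ∀ s, st s * s * st s = st s)
    (hu : ∀ s y : S, s * y * s = s → y * s * y = y → y = st s)
    (x : S) : st (st x) = x :=
  (hu _ _ (h2 x) (h1 x)).symm

theorem star_mul
    (h1 : ∀ s, s * st s * s = s) (h2 : ∀ s, st s * s * st s = st s)
    (hu : ∀ s y : S, s * y * s = s → y * s * y = y → y = st s)
    (x y : S) : st (x * y) = st y * st x := by
  have hc : (st x * x) * (y * st y) = (y * st y) * (st x * x) :=
    idem_comm h1 h2 hu (by rw [← mul_assoc, h2]) (by rw [← mul_assoc, h1])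
  symm
  apply hu
  · calc x * y * (st y * st x) * (x * y) = x * ((y * st y) * (st x * x)) * y := by
          simp only [mul_assoc]
      _ = (x * st x * x) * (y * st y * y) := by rw [← hc]; simp only [mul_assoc]
      _ = x * y := by rw [h1, h1]
  · calc st y * st x * (x * y) * (st y * st x) = st y * ((st x * x) * (y * st y)) * st x := by
          simp only [mul_assoc]
      _ = (st y * y * st y) * (st x * x * st x) := by rw [hc]; simp only [mul_assoc]
      _ = st y * st x := by rw [h2, h2]

end

end InvSe

/-- For an inverse semigroup `S` and idempotent `e`, the set `S(e)` with the
product `(p,q)(r,s) = (pr, qprr*p*)` and involution `(r,s)* = (r*, sr)` is a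
left involutive semigroup, and the first projection `ψₑ : S(e) → S` is an
étale `*`-homomorphism. -/
theorem representable_left_involutive_semigroup
    {S : Type*} [Semigroup S] (st : S → S)
    (hinv1 : ∀ s, s * st s * s = s)
    (hinv2 : ∀ s, st s * s * st s = st s)
    (huniq : ∀ s y : S, s * y * s = s → y * s * y = y → y = st s)
    (e : S) (he : e * e = e) :
    -- S(e) is closed under the product and the involution
    (∀ a ∈ Se st e, ∀ b ∈ Se st e, mulSe st a b ∈ Se st e) ∧
    (∀ a ∈ Se st e, starSe st a ∈ Se st e) ∧
    -- the product is associative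
    (∀ a ∈ Se st e, ∀ b ∈ Se st e, ∀ c ∈ Se st e,
      mulSe st (mulSe st a b) c = mulSe st a (mulSe st b c)) ∧
    -- the involution is an involution and every element is a partial isometry
    (∀ a ∈ Se st e, starSe st (starSe st a) = a) ∧
    (∀ a ∈ Se st e, mulSe st (mulSe st a (starSe st a)) a = a) ∧
    -- S(e) is left involutive: `(xy)* = (x*xy)* x*`
    (∀ a ∈ Se st e, ∀ b ∈ Se st e,
      starSe st (mulSe st a b) =
        mulSe st (starSe st (mulSe st (mulSe st (starSe st a) a) b))
          (starSe st a)) ∧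
    -- ψₑ = first projection is a `*`-homomorphism
    (∀ a b : S × S, (mulSe st a b).1 = a.1 * b.1) ∧
    (∀ a : S × S, (starSe st a).1 = st a.1) ∧
    -- ψₑ is étale: it induces a bijection from `a·S(e)` onto `a.1·S`
    (∀ a ∈ Se st e,
      Set.BijOn (fun z : S × S => z.1)
        {z | ∃ b ∈ Se st e, z = mulSe st a b}
        {t | ∃ s : S, t = a.1 * s}) := by
  have hss := InvSe.star_star hinv1 hinv2 huniq
  have hm := InvSe.star_mul hinv1 hinv2 huniq
  -- The inverse laws for words of length one and two, in right-associated form; the primed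
  -- versions carry an arbitrary right factor, so that they rewrite inside longer words.
  have c1 : ∀ s, s * (st s * s) = s := fun s => by rw [← mul_assoc, hinv1]
  have c1' : ∀ s z, s * (st s * (s * z)) = s * z := fun s z => by
    simp only [← mul_assoc, hinv1]
  have c2 : ∀ s, st s * (s * st s) = st s := fun s => by rw [← mul_assoc, hinv2]
  have d1 : ∀ p r, p * (r * (st r * (st p * (p * r)))) = p * r := fun p r => by
    simpa only [hm, mul_assoc] using c1 (p * r)
  have d1' : ∀ p r z, p * (r * (st r * (st p * (p * (r * z))))) = p * (r * z) := fun p r z => by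
    simpa only [hm, mul_assoc] using c1' (p * r) z
  -- The second component absorbs `rr*`, since `s rr* = s s*s = s`.
  have habs : ∀ a ∈ Se st e, a.2 * (a.1 * st a.1) = a.2 := fun a ha => by rw [← ha.1, c1]
  have hq : ∀ a ∈ Se st e, ∀ z, st a.2 * (a.2 * z) = a.1 * (st a.1 * z) := fun a ha z => by
    rw [← mul_assoc, ha.1, mul_assoc]
  have heq : ∀ a ∈ Se st e, ∀ z, e * (a.2 * z) = a.2 * z := fun a ha z => by
    rw [← mul_assoc, ha.2]
  refine ⟨?_, ?_, ?_, ?_, ?_, ?_, fun _ _ => rfl, fun _ => rfl, ?_⟩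
  · intro a ha b hb
    refine ⟨?_, ?_⟩
    · simp only [mulSe, hm, hss, mul_assoc, hq a ha, c1', d1']
    · simp only [mulSe, mul_assoc, heq a ha]
  · intro a ha
    refine ⟨?_, ?_⟩
    · simp only [starSe, hm, hss, mul_assoc, hq a ha, c1]
    · simp only [starSe, heq a ha]
  · intro a _ b _ c _
    simp only [mulSe, hm, mul_assoc, d1']
  · intro a ha
    simp only [starSe, hss, mul_assoc, habs a ha]
  · intro a ha
    simp only [mulSe, starSe, hm, hss, mul_assoc, c1, habs a ha]
  · intro a ha b hb
    simp only [mulSe, starSe, hm, hss, mul_assoc, c1, c1', c2, d1]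
  · intro a ha
    refine ⟨?_, ?_, ?_⟩
    · rintro _ ⟨b, _, rfl⟩
      exact ⟨b.1, rfl⟩
    · rintro _ ⟨b, _, rfl⟩ _ ⟨c, _, rfl⟩ h
      have hsnd : ∀ x : S × S, (mulSe st a x).2 = a.2 * ((a.1 * x.1) * st (a.1 * x.1)) := fun x => by
        simp only [mulSe, hm, mul_assoc]
      have h' : a.1 * b.1 = a.1 * c.1 := h
      exact Prod.ext h (by rw [hsnd, hsnd, h'])
    · rintro _ ⟨t, rfl⟩
      refine ⟨_, ⟨(st a.1 * a.1 * t, a.2 * a.1 * ((st a.1 * a.1 * t) * st (st a.1 * a.1 * t))),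
        ⟨?_, ?_⟩, rfl⟩, ?_⟩
      · simp only [hm, hss, mul_assoc, hq a ha, c1', d1']
      · simp only [mul_assoc, heq a ha]
      · simp only [mulSe, mul_assoc, c1']
end

section
/- Let S be an inverse semigroup and e ∈ S an idempotent. For elements (p,q) and (r,s) of S(e), the equality ((p,q)(r,s))* = (r,s)*(p,q)* holds if and only if s and qp are left compatible in S, i.e. s·(qp)*(qp) = (qp)·s*s. -/
/-- The product of two idempotents is idempotent: uniqueness gives `(ab)* = b(ab)*a`, which makes
`(ab)*` idempotent, hence equal to its own inverse `ab`. -/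
theorem idem_mul_idem {S : Type*} [Semigroup S] (st : S → S)
    (hinv1 : ∀ s, s * st s * s = s)
    (hinv2 : ∀ s, st s * s * st s = st s)
    (huniq : ∀ s y : S, s * y * s = s → y * s * y = y → y = st s)
    {a b : S} (ha : a * a = a) (hb : b * b = b) : (a * b) * (a * b) = a * b := by
  have h1 := hinv1 (a * b)
  have h2 := hinv2 (a * b)
  have hab := huniq (st (a * b)) (a * b) h2 h1
  generalize st (a * b) = x at *
  have hx : b * x * a = st (a * b) := by
    apply huniq
    · calc a * b * (b * x * a) * (a * b) = a * (b * b) * x * (a * a) * b := by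
            simp only [mul_assoc]
        _ = a * b * x * (a * b) := by rw [ha, hb]; simp only [mul_assoc]
        _ = a * b := h1
    · calc b * x * a * (a * b) * (b * x * a) = b * x * (a * a) * (b * b) * x * a := by
            simp only [mul_assoc]
        _ = b * (x * (a * b) * x) * a := by rw [ha, hb]; simp only [mul_assoc]
        _ = b * x * a := by rw [h2]
  have hx' : b * x * a = x := hx.trans (huniq _ _ h1 h2).symm
  have hxx : x * x = x := by
    calc x * x = (b * x * a) * (b * x * a) := by rw [hx']
      _ = b * (x * (a * b) * x) * a := by simp only [mul_assoc]
      _ = x := by rw [h2, hx']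
  have : x = st x := huniq x x (by rw [hxx, hxx]) (by rw [hxx, hxx])
  rw [hab, ← this, hxx]

theorem idem_comm {S : Type*} [Semigroup S] (st : S → S)
    (hinv1 : ∀ s, s * st s * s = s)
    (hinv2 : ∀ s, st s * s * st s = st s)
    (huniq : ∀ s y : S, s * y * s = s → y * s * y = y → y = st s)
    {a b : S} (ha : a * a = a) (hb : b * b = b) : a * b = b * a := by
  have hab := idem_mul_idem st hinv1 hinv2 huniq ha hb
  have hba := idem_mul_idem st hinv1 hinv2 huniq hb ha
  -- both `a * b` and `b * a` are inverses of `a * b`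
  have h1 : a * b = st (a * b) := huniq _ _ (by rw [hab, hab]) (by rw [hab, hab])
  have h2 : b * a = st (a * b) := by
    apply huniq
    · calc a * b * (b * a) * (a * b) = a * (b * b) * (a * a) * b := by simp only [mul_assoc]
        _ = a * b := by rw [ha, hb, mul_assoc, hab]
    · calc b * a * (a * b) * (b * a) = b * (a * a) * (b * b) * a := by simp only [mul_assoc]
        _ = b * a := by rw [ha, hb, mul_assoc, hba]
  rw [h2, ← h1]

theorem inv_mul_rev {S : Type*} [Semigroup S] (st : S → S)
    (hinv1 : ∀ s, s * st s * s = s)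
    (hinv2 : ∀ s, st s * s * st s = st s)
    (huniq : ∀ s y : S, s * y * s = s → y * s * y = y → y = st s)
    (a b : S) : st (a * b) = st b * st a := by
  have hc : (st a * a) * (b * st b) = (b * st b) * (st a * a) :=
    idem_comm st hinv1 hinv2 huniq (by rw [← mul_assoc, hinv2]) (by rw [← mul_assoc, hinv1])
  symm
  apply huniq
  · calc a * b * (st b * st a) * (a * b) = a * ((b * st b) * (st a * a)) * b := by
          simp only [mul_assoc]
      _ = (a * st a * a) * (b * st b * b) := by rw [← hc]; simp only [mul_assoc]
      _ = a * b := by rw [hinv1, hinv1]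
  · calc st b * st a * (a * b) * (st b * st a) = st b * ((st a * a) * (b * st b)) * st a := by
          simp only [mul_assoc]
      _ = (st b * b * st b) * (st a * a * st a) := by rw [hc]; simp only [mul_assoc]
      _ = st b * st a := by rw [hinv2, hinv2]

/-- In `S(e)`, `((p,q)(r,s))* = (r,s)*(p,q)*` holds iff `s` and `qp` are
left compatible in `S`, i.e. `s(qp)*(qp) = (qp)s*s`. -/
theorem star_anticommutes_iff_left_compatible
    {S : Type*} [Semigroup S] (st : S → S)
    (hinv1 : ∀ s, s * st s * s = s)
    (hinv2 : ∀ s, st s * s * st s = st s)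
    (huniq : ∀ s y : S, s * y * s = s → y * s * y = y → y = st s)
    (e : S) (he : e * e = e)
    (p q r s : S)
    (hpq : (p, q) ∈ Se st e) (hrs : (r, s) ∈ Se st e) :
    starSe st (mulSe st (p, q) (r, s)) =
      mulSe st (starSe st (r, s)) (starSe st (p, q)) ↔
    s * st (q * p) * (q * p) = q * p * (st s * s) := by
  obtain ⟨hq, -⟩ := hpq
  obtain ⟨hs, -⟩ := hrs
  simp only at hq hs
  have hrev := inv_mul_rev st hinv1 hinv2 huniq
  have hss : ∀ x, st (st x) = x := fun x => (huniq _ _ (hinv2 x) (hinv1 x)).symm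
  have hc : (st p * p) * (r * st r) = (r * st r) * (st p * p) :=
    idem_comm st hinv1 hinv2 huniq (by rw [← mul_assoc, hinv2]) (by rw [← mul_assoc, hinv1])
  have hsr : s * (r * st r) = s := by rw [← hs, ← mul_assoc, hinv1]
  have hqp : st (q * p) * (q * p) = st p * p := by
    calc st (q * p) * (q * p) = st p * (st q * q) * p := by rw [hrev]; simp only [mul_assoc]
      _ = (st p * p * st p) * p := by rw [hq]; simp only [mul_assoc]
      _ = st p * p := by rw [hinv2]
  have hL : q * p * r * st r * st p * (p * r) = q * p * r := by
    calc q * p * r * st r * st p * (p * r) = q * (p * r * (st r * st p) * (p * r)) := by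
          simp only [mul_assoc]
      _ = q * p * r := by rw [← hrev, hinv1, mul_assoc]
  have hR : s * r * st r * st p * p * r = s * (st p * p) * r := by
    calc s * r * st r * st p * p * r = s * (r * st r) * (st p * p) * r := by
          simp only [mul_assoc]
      _ = s * (st p * p) * r := by rw [hsr]
  simp only [starSe, mulSe, Prod.mk.injEq, hrev, hss, true_and]
  rw [hL, hR, ← hrev, mul_assoc s (st (q * p)), hqp, hs]
  constructor
  · intro h
    calc s * (st p * p) = s * (r * st r) * (st p * p) := by rw [hsr]
      _ = s * ((st p * p) * (r * st r)) := by rw [hc, mul_assoc]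
      _ = s * (st p * p) * r * st r := by simp only [mul_assoc]
      _ = q * p * (r * st r) := by rw [← h]; simp only [mul_assoc]
  · intro h
    rw [h, mul_assoc (q * p) (r * st r) r, hinv1]
end
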